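/- Let κ > 0, S₀ > 0, r ∈ ℝ, τ > 0 and σ > 0. Then the function s ↦ (S₀/(τ s²))·e^{-rτ}·E[ (A_{s²τ} − s²κτ/S₀)^+ ] is differentiable at σ with derivative ν₀ = −(2/σ)·Call₀ + (2S₀/σ)·e^{-rτ}·P[ A_{σ²τ}^{(1)} > σ²κτ/S₀ ] − (2κ/σ)·e^{-rτ}·P[ A_{σ²τ} > σ²κτ/S₀ ], where Call₀ = (S₀/(τσ²))·e^{-rτ}·E[(A_{σ²τ} − σ²κτ/S₀)^+]. -/

import Mathlib

open MeasureTheory ProbabilityTheory Real Set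

noncomputable section

/-- A standard one-dimensional Brownian motion `B` (with `B 0 = 0`, continuous
paths, Gaussian increments and independent increments) on a probability space
with measure `P`. -/
structure IsBrownianMotion {Ω : Type*} [MeasurableSpace Ω]
    (P : Measure Ω) (B : ℝ → Ω → ℝ) : Prop where
  isProbabilityMeasure : IsProbabilityMeasure P
  measurable : ∀ t : ℝ, Measurable (B t)
  start : ∀ ω, B 0 ω = 0
  continuous_paths : ∀ ω, Continuous fun t => B t ω
  gaussian_increments : ∀ s t : ℝ, 0 ≤ s → s ≤ t →
    P.map (fun ω => B t ω - B s ω) = gaussianReal 0 (Real.toNNReal (t - s))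
  indep_increments : ∀ t : ℕ → ℝ, Monotone t → 0 ≤ t 0 →
    iIndepFun
      (fun (i : ℕ) (ω : Ω) => B (t (i + 1)) ω - B (t i) ω) P

/-- The exponential martingale `M_t = exp (B_t - t/2)`. -/
def M {Ω : Type*} (B : ℝ → Ω → ℝ) (t : ℝ) (ω : Ω) : ℝ :=
  Real.exp (B t ω - t / 2)

/-- The time integral `A_t = ∫_0^t exp (B_s - s/2) ds`. -/
def A {Ω : Type*} (B : ℝ → Ω → ℝ) (t : ℝ) (ω : Ω) : ℝ :=
  ∫ s in (0 : ℝ)..t, Real.exp (B s ω - s / 2)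

/-- The time integral with drift `ν`: `A_t^{(ν)} = ∫_0^t exp (B_s + (ν - 1/2) s) ds`. -/
def Adrift {Ω : Type*} (B : ℝ → Ω → ℝ) (ν t : ℝ) (ω : Ω) : ℝ :=
  ∫ s in (0 : ℝ)..t, Real.exp (B s ω + (ν - 1 / 2) * s)

open Filter Topology Finset in
theorem riemann_tendsto (g : ℝ → ℝ) (hg : Continuous g) (T : ℝ) (hT : 0 < T) :
    Tendsto (fun n : ℕ => ∑ i ∈ Finset.range (n+1), T / (n+1 : ℝ) * g (i * (T / (n+1 : ℝ))))
      atTop (𝓝 (∫ s in (0:ℝ)..T, g s)) := by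
  have huc : UniformContinuousOn g (Set.Icc 0 T) :=
    isCompact_Icc.uniformContinuousOn_of_continuous hg.continuousOn
  rw [Metric.tendsto_atTop]
  intro ε hε
  rw [Metric.uniformContinuousOn_iff] at huc
  obtain ⟨δ, hδ, h⟩ := huc (ε / (2 * T)) (by positivity)
  have hl : Tendsto (fun n : ℕ => T / (n + 1 : ℝ)) atTop (𝓝 0) := by
    have := (tendsto_one_div_add_atTop_nhds_zero_nat (𝕜 := ℝ)).const_mul T
    simpa [mul_one_div, div_eq_mul_inv] using this
  obtain ⟨N, hN⟩ := (Metric.tendsto_atTop.1 hl) δ hδ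
  refine ⟨N, fun n hn => ?_⟩
  have hd := hN n hn
  have hnp : (0:ℝ) < n + 1 := by positivity
  set d := T / (n + 1 : ℝ) with hd'
  have hdp : 0 < d := by positivity
  have hdδ : d < δ := by
    rw [Real.dist_eq, sub_zero, abs_of_pos hdp] at hd; exact hd
  have hT' : T = ((n + 1 : ℕ) : ℝ) * d := by rw [hd']; push_cast; field_simp
  have hsplit : ∑ i ∈ Finset.range (n+1), ∫ s in ((i : ℕ) * d)..((i + 1 : ℕ) * d), g s
      = ∫ s in (0:ℝ)..T, g s := by
    have := intervalIntegral.sum_integral_adjacent_intervals (f := g) (μ := volume)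
      (a := fun i : ℕ => (i : ℝ) * d) (n := n + 1)
      (fun k _ => hg.intervalIntegrable _ _)
    rw [this, ← hT']; simp
  rw [← hsplit, dist_eq_norm, ← Finset.sum_sub_distrib]
  refine (norm_sum_le _ _).trans_lt ?_
  have hb : ∀ i ∈ Finset.range (n+1),
      ‖d * g (i * d) - ∫ s in ((i : ℕ) * d)..((i + 1 : ℕ) * d), g s‖ ≤ ε / (2 * T) * d := by
    intro i hi
    have hi' : i + 1 ≤ n + 1 := Finset.mem_range.1 hi
    have h1 : d * g (i * d) = ∫ s in ((i : ℕ) * d)..((i + 1 : ℕ) * d), g (i * d) := by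
      rw [intervalIntegral.integral_const]; push_cast; simp only [smul_eq_mul]; ring
    rw [h1, ← intervalIntegral.integral_sub (by simp) (hg.intervalIntegrable _ _)]
    have hle : (i : ℝ) * d ≤ ((i + 1 : ℕ) : ℝ) * d := by push_cast; nlinarith
    have hle2 : ((i + 1 : ℕ) : ℝ) * d ≤ T := by
      rw [hT']; gcongr
    have := intervalIntegral.norm_integral_le_of_norm_le_const (a := (i:ℝ) * d)
      (b := ((i + 1 : ℕ) : ℝ) * d) (C := ε / (2 * T)) (f := fun s => g (i * d) - g s) ?_
    · refine this.trans (le_of_eq ?_)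
      rw [abs_of_nonneg (by linarith)]; push_cast; ring
    · intro x hx
      rw [Set.uIoc_of_le hle] at hx
      have hi0 : 0 ≤ (i : ℝ) * d := by positivity
      have := h (i * d) ⟨hi0, by linarith⟩ x ⟨by linarith [hx.1], by linarith [hx.2]⟩ ?_
      · rw [dist_eq_norm] at this; exact this.le
      · rw [Real.dist_eq, abs_sub_comm, abs_of_nonneg (by linarith [hx.1])]
        have := hx.2; push_cast at this; nlinarith
  refine (Finset.sum_le_sum hb).trans_lt ?_
  rw [Finset.sum_const, Finset.card_range, nsmul_eq_mul]
  have : ((n + 1 : ℕ) : ℝ) * (ε / (2 * T) * d) = ε / 2 := by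
    rw [mul_left_comm, ← hT']; field_simp
  rw [this]; linarith

theorem gauss_tilt (θ : ℝ) (v : NNReal) (hv : v ≠ 0) :
    (gaussianReal 0 v).withDensity (fun x => ENNReal.ofReal (Real.exp (θ * x - θ^2 * v / 2)))
      = gaussianReal (θ * v) v := by
  rw [gaussianReal_of_var_ne_zero _ hv, gaussianReal_of_var_ne_zero _ hv,
    ← withDensity_mul _ (measurable_gaussianPDF _ _) (by fun_prop)]
  congr 1
  ext x
  have hv' : (v : ℝ) ≠ 0 := by exact_mod_cast hv
  simp only [Pi.mul_apply, gaussianPDF]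
  rw [← ENNReal.ofReal_mul (gaussianPDFReal_nonneg _ _ _)]
  congr 1
  simp only [gaussianPDFReal]
  rw [mul_assoc, ← Real.exp_add]
  congr 2
  field_simp
  ring

theorem cm_vec {Ω : Type*} [MeasurableSpace Ω] (P : Measure Ω) [IsProbabilityMeasure P]
    (X : ℕ → Ω → ℝ) (hX : ∀ i, Measurable (X i)) (hI : iIndepFun X P) (v : NNReal) (hv : v ≠ 0)
    (hl : ∀ i, P.map (X i) = gaussianReal 0 v) (θ : ℝ) (n : ℕ) :
    (P.withDensity (fun ω => ENNReal.ofReal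
      (Real.exp (θ * (∑ i ∈ Finset.range n, X i ω) - θ^2 * (n * v) / 2)))).map
        (fun ω (i : Fin n) => X i ω)
      = P.map (fun ω (i : Fin n) => X i ω + θ * v) := by
  have hI' : iIndepFun (fun (i : Fin n) => X i) P := hI.precomp Fin.val_injective
  have hI2 : iIndepFun (fun (i : Fin n) ω => X i ω + θ * v) P :=
    hI'.comp (fun _ x => x + θ * v) (fun _ => by fun_prop)
  have e1 : P.map (fun ω (i : Fin n) => X i ω + θ * v)
      = Measure.pi (fun _ : Fin n => gaussianReal (θ * v) v) := by
    rw [(iIndepFun_iff_map_fun_eq_pi_map (fun i => by fun_prop)).1 hI2]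
    congr 1
    ext1 i
    have : (fun ω => X i ω + θ * v) = (fun x => x + θ * v) ∘ X i := rfl
    rw [this, ← Measure.map_map (by fun_prop) (hX i), hl, gaussianReal_map_add_const, zero_add]
  rw [e1]
  symm
  apply Measure.pi_eq
  intro s hs
  rw [Measure.map_apply (by fun_prop) (MeasurableSet.univ_pi hs),
    withDensity_apply _ ((by fun_prop : Measurable (fun ω (i : Fin n) => X i ω))
      (MeasurableSet.univ_pi hs)), ← lintegral_indicator ((by fun_prop : Measurable
        (fun ω (i : Fin n) => X i ω)) (MeasurableSet.univ_pi hs))]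
  let w : ℝ → ENNReal := fun x => ENNReal.ofReal (Real.exp (θ * x - θ^2 * v / 2))
  have hw : Measurable w := by fun_prop
  have hI3 : iIndepFun (fun (i : Fin n) ω => (s i).indicator w (X i ω)) P :=
    hI'.comp (fun i => (s i).indicator w) (fun i => hw.indicator (hs i))
  have := lintegral_prod_eq_prod_lintegral_of_indepFun Finset.univ _ hI3
    (fun i => (hw.indicator (hs i)).comp (hX i))
  have e2 : ∀ i : Fin n, ∫⁻ ω, (s i).indicator w (X i ω) ∂P = gaussianReal (θ * v) v (s i) := by
    intro i
    rw [← gauss_tilt θ v hv, withDensity_apply _ (hs i), ← lintegral_indicator (hs i), ← hl i,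
      lintegral_map (hw.indicator (hs i)) (hX i)]
  simp_rw [e2] at this
  rw [← this]
  congr 1
  ext ω
  by_cases hω : ∀ i : Fin n, X i ω ∈ s i
  · rw [Set.indicator_of_mem (by simpa [Set.mem_preimage, Set.mem_pi] using hω)]
    simp_rw [fun i => Set.indicator_of_mem (hω i) w]
    simp only [w]
    rw [← ENNReal.ofReal_prod_of_nonneg (fun i _ => (Real.exp_pos _).le), ← Real.exp_sum]
    congr 2
    rw [Finset.sum_sub_distrib, ← Finset.mul_sum, Finset.sum_range]
    simp
    ring
  · rw [Set.indicator_of_notMem (by simpa [Set.mem_preimage, Set.mem_pi] using hω)]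
    push Not at hω
    obtain ⟨i, hi⟩ := hω
    exact (Finset.prod_eq_zero (Finset.mem_univ i) (by simp [hi])).symm

theorem meas_uncurry {Ω : Type*} [MeasurableSpace Ω] (u : ℝ → Ω → ℝ)
    (hc : ∀ ω, Continuous fun s => u s ω) (hm : ∀ s, Measurable (u s)) :
    StronglyMeasurable (Function.uncurry u) :=
  stronglyMeasurable_uncurry_of_continuous_of_stronglyMeasurable hc
    (fun s => (hm s).stronglyMeasurable)

theorem meas_int {Ω : Type*} [MeasurableSpace Ω] (u : ℝ → Ω → ℝ)
    (hc : ∀ ω, Continuous fun s => u s ω) (hm : ∀ s, Measurable (u s)) (a b : ℝ) :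
    Measurable (fun ω => ∫ s in a..b, u s ω) := by
  have h := meas_uncurry u hc hm
  have h' : StronglyMeasurable (Function.uncurry fun ω s => u s ω) := by
    exact h.comp_measurable measurable_swap
  simp only [intervalIntegral]
  exact (h'.integral_prod_right (ν := volume.restrict (Set.Ioc a b))).measurable.sub
    (h'.integral_prod_right (ν := volume.restrict (Set.Ioc b a))).measurable

theorem meas_A {Ω : Type*} [MeasurableSpace Ω] {P : Measure Ω} {B : ℝ → Ω → ℝ}
    (hB : IsBrownianMotion P B) (T : ℝ) : Measurable (A B T) := by
  have := hB.measurable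
  have := hB.continuous_paths
  exact meas_int (fun s ω => Real.exp (B s ω - s / 2)) (fun ω => by fun_prop)
    (fun s => by fun_prop) 0 T

theorem meas_Adrift {Ω : Type*} [MeasurableSpace Ω] {P : Measure Ω} {B : ℝ → Ω → ℝ}
    (hB : IsBrownianMotion P B) (ν T : ℝ) : Measurable (Adrift B ν T) := by
  have := hB.measurable
  have := hB.continuous_paths
  exact meas_int (fun s ω => Real.exp (B s ω + (ν - 1 / 2) * s)) (fun ω => by fun_prop)
    (fun s => by fun_prop) 0 T

theorem law_B {Ω : Type*} [MeasurableSpace Ω] {P : Measure Ω} {B : ℝ → Ω → ℝ}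
    (hB : IsBrownianMotion P B) (t : ℝ) (ht : 0 ≤ t) :
    P.map (B t) = gaussianReal 0 (Real.toNNReal t) := by
  have := hB.gaussian_increments 0 t le_rfl ht
  simpa [hB.start] using this

theorem integrable_Z {Ω : Type*} [MeasurableSpace Ω] {P : Measure Ω} {B : ℝ → Ω → ℝ}
    (hB : IsBrownianMotion P B) (θ t : ℝ) (ht : 0 ≤ t) :
    Integrable (fun ω => Real.exp (θ * B t ω - θ ^ 2 * t / 2)) P := by
  have h1 : Integrable (fun x => Real.exp (θ * x)) (P.map (B t)) := by
    rw [law_B hB t ht]; exact integrable_exp_mul_gaussianReal θ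
  have h2 := h1.comp_measurable (hB.measurable t)
  have := h2.mul_const (Real.exp (- (θ ^ 2 * t / 2)))
  refine this.congr (Filter.Eventually.of_forall fun ω => ?_)
  simp only [Function.comp, ← Real.exp_add, sub_eq_add_neg]

theorem integral_Z {Ω : Type*} [MeasurableSpace Ω] {P : Measure Ω} {B : ℝ → Ω → ℝ}
    (hB : IsBrownianMotion P B) (θ t : ℝ) (ht : 0 ≤ t) :
    ∫ ω, Real.exp (θ * B t ω - θ ^ 2 * t / 2) ∂P = 1 := by
  have h := mgf_gaussianReal (law_B hB t ht) θ
  simp only [mgf] at h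
  simp_rw [sub_eq_add_neg, Real.exp_add]
  rw [integral_mul_const, h, ← Real.exp_add, Real.coe_toNNReal t ht]
  rw [Real.exp_eq_one_iff]; ring

open Filter Topology in
theorem girsanov {Ω : Type*} [MeasurableSpace Ω] {P : Measure Ω} {B : ℝ → Ω → ℝ}
    (hB : IsBrownianMotion P B) (θ T : ℝ) (hT : 0 < T) :
    (P.withDensity (fun ω => ENNReal.ofReal (Real.exp (θ * B T ω - θ ^ 2 * T / 2)))).map (A B T)
      = P.map (Adrift B θ T) := by
  have := hB.isProbabilityMeasure
  have hBm := hB.measurable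
  have hBc := hB.continuous_paths
  have hZi := integrable_Z hB θ T hT.le
  set Q := P.withDensity (fun ω => ENNReal.ofReal (Real.exp (θ * B T ω - θ ^ 2 * T / 2))) with hQ
  have : IsFiniteMeasure Q := isFiniteMeasure_withDensity_ofReal hZi.2
  have : IsFiniteMeasure (Q.map (A B T)) := inferInstance
  have : IsFiniteMeasure (P.map (Adrift B θ T)) := inferInstance
  apply ext_of_forall_integral_eq_of_IsFiniteMeasure
  intro f
  rw [integral_map (meas_A hB T).aemeasurable f.continuous.aestronglyMeasurable,
    integral_map (meas_Adrift hB θ T).aemeasurable f.continuous.aestronglyMeasurable]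
  -- Riemann sums
  let R : ℝ → ℕ → Ω → ℝ := fun ν n ω => ∑ i ∈ Finset.range (n+1), T / (n+1 : ℝ) *
      Real.exp (B (i * (T / (n+1 : ℝ))) ω + (ν - 1 / 2) * (i * (T / (n+1 : ℝ))))
  have hRm : ∀ ν n, Measurable (R ν n) := by
    intro ν n; simp only [R]; fun_prop
  have hRl : ∀ ν ω, Tendsto (fun n => R ν n ω) atTop (𝓝 (Adrift B ν T ω)) := by
    intro ν ω
    exact riemann_tendsto (fun s => Real.exp (B s ω + (ν - 1 / 2) * s)) (by fun_prop) T hT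
  have hA0 : ∀ ω, A B T ω = Adrift B 0 T ω := by
    intro ω; simp only [A, Adrift]; congr 1; ext s; ring_nf
  have hlim : ∀ (μ : Measure Ω) [IsFiniteMeasure μ] (ν : ℝ),
      Tendsto (fun n => ∫ ω, f (R ν n ω) ∂μ) atTop (𝓝 (∫ ω, f (Adrift B ν T ω) ∂μ)) := by
    intro μ _ ν
    refine tendsto_integral_of_dominated_convergence (fun _ => ‖f‖) ?_ (integrable_const _) ?_ ?_
    · intro n; exact (f.continuous.measurable.comp (hRm ν n)).aestronglyMeasurable
    · intro n; exact Eventually.of_forall fun ω => f.norm_coe_le_norm _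
    · exact Eventually.of_forall fun ω => (f.continuous.tendsto _).comp (hRl ν ω)
  have key : ∀ n, ∫ ω, f (R 0 n ω) ∂Q = ∫ ω, f (R θ n ω) ∂P := by
    intro n
    have hnp : (0:ℝ) < n + 1 := by positivity
    set d := T / (n + 1 : ℝ) with hd'
    have hdp : 0 < d := by positivity
    have hT' : T = ((n + 1 : ℕ) : ℝ) * d := by rw [hd']; push_cast; field_simp
    let X : ℕ → Ω → ℝ := fun i ω => B (((i + 1 : ℕ) : ℝ) * d) ω - B ((i : ℝ) * d) ω
    have hXm : ∀ i, Measurable (X i) := fun i => by simp only [X]; fun_prop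
    have hXI : iIndepFun X P := hB.indep_increments (fun i : ℕ => (i : ℝ) * d)
      (fun i j hij => by dsimp only; gcongr) (by simp)
    have hXl : ∀ i, P.map (X i) = gaussianReal 0 (Real.toNNReal d) := by
      intro i
      have := hB.gaussian_increments ((i : ℝ) * d) (((i + 1 : ℕ) : ℝ) * d) (by positivity)
        (by gcongr; simp)
      simp only [X]
      rw [this]; congr 2; push_cast; ring
    have hXs : ∀ i ω, ∑ j ∈ Finset.range i, X j ω = B (i * d) ω := by
      intro i ω
      have := Finset.sum_range_sub (fun j : ℕ => B ((j : ℝ) * d) ω) i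
      simp only [X]
      rw [this]; simp [hB.start]
    have hcm := cm_vec P X hXm hXI (Real.toNNReal d) (by simpa using hdp) hXl θ (n + 1)
    simp_rw [hXs, Real.coe_toNNReal d hdp.le, ← hT'] at hcm
    rw [← hQ] at hcm
    let F : (Fin (n+1) → ℝ) → ℝ := fun x => ∑ i ∈ Finset.range (n+1), d *
      Real.exp ((∑ j ∈ Finset.range i, if h : j < n + 1 then x ⟨j, h⟩ else 0)
        + (0 - 1/2) * (i * d))
    have hF : Measurable F := by
      refine Finset.measurable_fun_sum _ fun i _ => ?_
      refine measurable_const.mul (Real.measurable_exp.comp ?_)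
      refine Measurable.add_const (Finset.measurable_fun_sum _ fun j _ => ?_) _
      split_ifs <;> fun_prop
    have c1 : ∀ ω, R 0 n ω = F (fun i => X i ω) := by
      intro ω
      refine Finset.sum_congr rfl fun i hi => ?_
      have hi' := Finset.mem_range.1 hi
      have : (∑ j ∈ Finset.range i, if h : j < n + 1 then
          (fun k : Fin (n+1) => X k ω) ⟨j, h⟩ else 0) = B (i * d) ω := by
        rw [← hXs]
        refine Finset.sum_congr rfl fun j hj => ?_
        have := Finset.mem_range.1 hj
        rw [dif_pos (by omega)]
      rw [this]
    have c2 : ∀ ω, R θ n ω = F (fun i => X i ω + θ * d) := by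
      intro ω
      refine Finset.sum_congr rfl fun i hi => ?_
      have hi' := Finset.mem_range.1 hi
      have : (∑ j ∈ Finset.range i, if h : j < n + 1 then
          (fun k : Fin (n+1) => X k ω + θ * d) ⟨j, h⟩ else 0) = B (i * d) ω + i * (θ * d) := by
        rw [← hXs]
        have : (i : ℝ) * (θ * d) = ∑ j ∈ Finset.range i, θ * d := by simp
        rw [this, ← Finset.sum_add_distrib]
        refine Finset.sum_congr rfl fun j hj => ?_
        have := Finset.mem_range.1 hj
        rw [dif_pos (by omega)]
      rw [this]
      congr 2
      ring
    simp_rw [c1, c2]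
    have i1 := integral_map (μ := Q) (φ := fun ω (i : Fin (n+1)) => X i ω) (by fun_prop)
      (f := fun x => f (F x)) (f.continuous.measurable.comp hF).aestronglyMeasurable
    have i2 := integral_map (μ := P) (φ := fun ω (i : Fin (n+1)) => X i ω + θ * d) (by fun_prop)
      (f := fun x => f (F x)) (f.continuous.measurable.comp hF).aestronglyMeasurable
    rw [← i1, ← i2, hcm]
  simp_rw [hA0]
  have l1 := hlim Q 0
  simp_rw [key] at l1
  exact tendsto_nhds_unique l1 (hlim P θ)

theorem Adrift_strictMono {Ω : Type*} [MeasurableSpace Ω] {P : Measure Ω} {B : ℝ → Ω → ℝ}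
    (hB : IsBrownianMotion P B) (T : ℝ) (hT : 0 < T) (ω : Ω) :
    StrictMono (fun ν => Adrift B ν T ω) := by
  intro a b hab
  have hc := hB.continuous_paths
  have hle : ∀ x ∈ Set.Ioc 0 T, Real.exp (B x ω + (a - 1 / 2) * x)
      < Real.exp (B x ω + (b - 1 / 2) * x) := by
    intro x hx
    have := hx.1
    apply Real.exp_lt_exp.2
    nlinarith
  exact intervalIntegral.integral_lt_integral_of_continuousOn_of_le_of_exists_lt hT
    (by fun_prop) (by fun_prop) (fun x hx => (hle x hx).le) ⟨T, ⟨hT.le, le_rfl⟩, hle T ⟨hT, le_rfl⟩⟩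

theorem no_atom {Ω : Type*} [MeasurableSpace Ω] {P : Measure Ω} {B : ℝ → Ω → ℝ}
    (hB : IsBrownianMotion P B) (T : ℝ) (hT : 0 < T) (k : ℝ) :
    P {ω | A B T ω = k} = 0 := by
  have := hB.isProbabilityMeasure
  have hBm := hB.measurable
  have hcount := Measure.countable_meas_pos_of_disjoint_iUnion (μ := P)
    (As := fun θ : ℝ => {ω | Adrift B θ T ω = k})
    (fun θ => (meas_Adrift hB θ T) (measurableSet_singleton k)) (by
      intro a b hab
      refine Set.disjoint_left.2 fun ω h1 h2 => hab ?_
      exact (Adrift_strictMono hB T hT ω).injective (h1.trans h2.symm))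
  obtain ⟨θ, hθ⟩ : ∃ θ : ℝ, ¬ 0 < P {ω | Adrift B θ T ω = k} := by
    by_contra! h
    exact Set.not_countable_univ (α := ℝ) (hcount.mono fun θ _ => h θ)
  have h0 : P {ω | Adrift B θ T ω = k} = 0 := by simpa using hθ
  have hg := congrArg (fun m => m {k}) (girsanov hB θ T hT)
  rw [Measure.map_apply (meas_A hB T) (measurableSet_singleton k),
    Measure.map_apply (meas_Adrift hB θ T) (measurableSet_singleton k)] at hg
  have hz := hg.trans h0
  have hm : Measurable (fun ω => ENNReal.ofReal (Real.exp (θ * B T ω - θ ^ 2 * T / 2))) := by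
    fun_prop
  rw [withDensity_apply_eq_zero hm] at hz
  refine measure_mono_null ?_ hz
  intro ω hω
  refine ⟨?_, hω⟩
  simp [Real.exp_pos]

theorem enorm_int_le {Ω : Type*} [MeasurableSpace Ω] {P : Measure Ω} [SFinite P] (u : ℝ → Ω → ℝ)
    (hc : ∀ ω, Continuous fun s => u s ω) (hm : ∀ s, Measurable (u s)) (a b : ℝ) (C : ENNReal)
    (hC : ∀ s ∈ Set.uIoc a b, ∫⁻ ω, ‖u s ω‖ₑ ∂P ≤ C) :
    ∫⁻ ω, ‖∫ s in a..b, u s ω‖ₑ ∂P ≤ C * ENNReal.ofReal |b - a| := by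
  have h := meas_uncurry u hc hm
  have h1 : ∀ ω, ‖∫ s in a..b, u s ω‖ₑ ≤ ∫⁻ s in Set.uIoc a b, ‖u s ω‖ₑ := by
    intro ω
    have : ‖∫ s in a..b, u s ω‖ₑ = ‖∫ s in Set.uIoc a b, u s ω‖ₑ := by
      rw [← ofReal_norm, intervalIntegral.norm_intervalIntegral_eq, ofReal_norm]
    rw [this]
    exact enorm_integral_le_lintegral_enorm _
  calc ∫⁻ ω, ‖∫ s in a..b, u s ω‖ₑ ∂P ≤ ∫⁻ ω, (∫⁻ s in Set.uIoc a b, ‖u s ω‖ₑ) ∂P :=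
        lintegral_mono h1
    _ = ∫⁻ s in Set.uIoc a b, (∫⁻ ω, ‖u s ω‖ₑ ∂P) := by
        refine lintegral_lintegral_swap ?_
        exact (h.comp_measurable measurable_swap).measurable.enorm.aemeasurable
    _ ≤ ∫⁻ s in Set.uIoc a b, C := by
        refine setLIntegral_mono measurable_const hC
    _ = C * ENNReal.ofReal |b - a| := by
        rw [setLIntegral_const, Real.volume_uIoc]

theorem integrable_M {Ω : Type*} [MeasurableSpace Ω] {P : Measure Ω} {B : ℝ → Ω → ℝ}
    (hB : IsBrownianMotion P B) (t : ℝ) (ht : 0 ≤ t) : Integrable (M B t) P := by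
  have := integrable_Z hB 1 t ht
  have e : M B t = fun ω => Real.exp (B t ω - t / 2) := rfl
  rw [e]
  simpa using this

theorem integral_M {Ω : Type*} [MeasurableSpace Ω] {P : Measure Ω} {B : ℝ → Ω → ℝ}
    (hB : IsBrownianMotion P B) (t : ℝ) (ht : 0 ≤ t) : ∫ ω, M B t ω ∂P = 1 := by
  have := integral_Z hB 1 t ht
  simpa [M] using this

open Filter Topology in
theorem M_L1 {Ω : Type*} [MeasurableSpace Ω] {P : Measure Ω} {B : ℝ → Ω → ℝ}
    (hB : IsBrownianMotion P B) (T : ℝ) (hT : 0 < T) :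
    Tendsto (fun s => ∫ ω, |M B s ω - M B T ω| ∂P) (𝓝 T) (𝓝 0) := by
  have hMT := integrable_M hB T hT.le
  have hBm := hB.measurable
  have hBc := hB.continuous_paths
  have hMm : ∀ s, Measurable (M B s) := fun s => by unfold M; fun_prop
  have hMc : ∀ ω, Continuous (fun s => M B s ω) := fun ω => by unfold M; fun_prop
  have hpos : ∀ s ω, 0 < M B s ω := fun s ω => Real.exp_pos _
  have hmin : Tendsto (fun s => ∫ ω, min (M B s ω) (M B T ω) ∂P) (𝓝 T) (𝓝 (∫ ω, M B T ω ∂P)) := by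
    refine tendsto_integral_filter_of_dominated_convergence (M B T) ?_ ?_ hMT ?_
    · exact Eventually.of_forall fun s => ((hMm s).min (hMm T)).aestronglyMeasurable
    · refine Eventually.of_forall fun s => Eventually.of_forall fun ω => ?_
      rw [Real.norm_of_nonneg (le_min (hpos s ω).le (hpos T ω).le)]
      exact min_le_right _ _
    · refine Eventually.of_forall fun ω => ?_
      have : Continuous fun s => min (M B s ω) (M B T ω) := (hMc ω).min continuous_const
      simpa using this.tendsto T
  rw [integral_M hB T hT.le] at hmin
  have h2 := (hmin.const_mul 2).const_sub 2
  norm_num at h2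
  refine h2.congr' ?_
  filter_upwards [lt_mem_nhds hT] with s hs
  have hMs := integrable_M hB s hs.le
  have e : ∀ ω, |M B s ω - M B T ω| = M B s ω + M B T ω - 2 * min (M B s ω) (M B T ω) := by
    intro ω
    rcases le_total (M B s ω) (M B T ω) with h | h
    · rw [min_eq_left h, abs_of_nonpos (by linarith)]; ring
    · rw [min_eq_right h, abs_of_nonneg (by linarith)]; ring
  simp_rw [e]
  have i1 : Integrable (fun ω => M B s ω + M B T ω) P := hMs.add hMT
  have i2 : Integrable (fun ω => 2 * min (M B s ω) (M B T ω)) P := (hMs.inf hMT).const_mul 2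
  rw [integral_sub i1 i2, integral_add hMs hMT,
    integral_const_mul, integral_M hB T hT.le, integral_M hB s hs.le]
  norm_num

theorem integrable_A {Ω : Type*} [MeasurableSpace Ω] {P : Measure Ω} {B : ℝ → Ω → ℝ}
    (hB : IsBrownianMotion P B) (t : ℝ) (ht : 0 ≤ t) : Integrable (A B t) P := by
  have := hB.isProbabilityMeasure
  have hBm := hB.measurable
  have hBc := hB.continuous_paths
  refine ⟨(meas_A hB t).aestronglyMeasurable, ?_⟩
  refine lt_of_le_of_lt (enorm_int_le (M B) (fun ω => by unfold M; fun_prop)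
    (fun s => by unfold M; fun_prop) 0 t 1 ?_) (by simp)
  intro s hs
  rw [Set.uIoc_of_le ht] at hs
  have h := ofReal_integral_norm_eq_lintegral_enorm (integrable_M hB s hs.1.le)
  rw [← h]
  have : ∀ ω, ‖M B s ω‖ = M B s ω := fun ω => Real.norm_of_nonneg (Real.exp_pos _).le
  simp_rw [this]
  rw [integral_M hB s hs.1.le]; simp

open Filter Topology in
theorem hasDerivAt_max (a m T : ℝ) (ha : a ≠ 0) :
    HasDerivAt (fun x => max (a + (x - T) * m) 0) (if 0 < a then m else 0) T := by
  have hlin : HasDerivAt (fun x => a + (x - T) * m) m T := by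
    simpa using (((hasDerivAt_id T).sub_const T).mul_const m).const_add a
  have hc : Tendsto (fun x => a + (x - T) * m) (𝓝 T) (𝓝 a) := by
    simpa using hlin.continuousAt.tendsto
  rcases lt_or_gt_of_ne ha with h | h
  · rw [if_neg (by linarith)]
    refine (hasDerivAt_const T (0:ℝ)).congr_of_eventuallyEq ?_
    filter_upwards [hc.eventually (gt_mem_nhds h)] with x hx
    exact max_eq_right hx.le
  · rw [if_pos h]
    refine hlin.congr_of_eventuallyEq ?_
    filter_upwards [hc.eventually (lt_mem_nhds h)] with x hx
    exact max_eq_left hx.le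

open Filter Topology in
theorem deriv_f {Ω : Type*} [MeasurableSpace Ω] {P : Measure Ω} {B : ℝ → Ω → ℝ}
    (hB : IsBrownianMotion P B) (T : ℝ) (hT : 0 < T) (c : ℝ) :
    HasDerivAt (fun x => ∫ ω, max (A B x ω - c * x) 0 ∂P)
      (∫ ω, (if 0 < A B T ω - c * T then M B T ω - c else 0) ∂P) T := by
  have := hB.isProbabilityMeasure
  have hBm := hB.measurable
  have hBc := hB.continuous_paths
  have hMm : ∀ s, Measurable (M B s) := fun s => by unfold M; fun_prop
  have hMc : ∀ ω, Continuous (fun s => M B s ω) := fun ω => by unfold M; fun_prop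
  have hMT := integrable_M hB T hT.le
  have hAT := integrable_A hB T hT.le
  have hAm := meas_A hB
  have hLi : ∀ x, Integrable (fun ω => A B T ω - c * T + (x - T) * (M B T ω - c)) P := fun x =>
    (hAT.sub (integrable_const _)).add ((hMT.sub (integrable_const _)).const_mul _)
  have hG : HasDerivAt (fun x => ∫ ω, max (A B T ω - c * T + (x - T) * (M B T ω - c)) 0 ∂P)
      (∫ ω, (if 0 < A B T ω - c * T then M B T ω - c else 0) ∂P) T := by
    refine (hasDerivAt_integral_of_dominated_loc_of_lip (s := Set.univ)
      (bound := fun ω => |M B T ω - c|) univ_mem ?_ ?_ ?_ ?_ ?_ ?_).2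
    · exact Eventually.of_forall fun x => (hLi x).pos_part.aestronglyMeasurable
    · exact (hLi T).pos_part
    · refine (Measurable.ite ?_ (by fun_prop) measurable_const).aestronglyMeasurable
      exact measurableSet_lt measurable_const (by fun_prop)
    · refine Eventually.of_forall fun ω => LipschitzOnWith.of_dist_le_mul fun x _ y _ => ?_
      rw [Real.dist_eq, Real.dist_eq]
      refine (abs_max_sub_max_le_abs _ _ _).trans (le_of_eq ?_)
      have : A B T ω - c * T + (x - T) * (M B T ω - c)
        - (A B T ω - c * T + (y - T) * (M B T ω - c)) = (M B T ω - c) * (x - y) := by ring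
      rw [this, abs_mul]; simp
    · exact (hMT.sub (integrable_const c)).abs
    · have h0 := no_atom hB T hT (c * T)
      have : ∀ᵐ ω ∂P, A B T ω ≠ c * T := by
        rw [ae_iff]; simpa using h0
      filter_upwards [this] with ω hω
      exact hasDerivAt_max _ _ _ (sub_ne_zero.2 hω)
  have hdiff : HasDerivAt (fun x => ∫ ω, max (A B x ω - c * x) 0 ∂P
      - ∫ ω, max (A B T ω - c * T + (x - T) * (M B T ω - c)) 0 ∂P) 0 T := by
    rw [hasDerivAt_iff_isLittleO, Asymptotics.isLittleO_iff]
    intro ε hε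
    have hev := (M_L1 hB T hT).eventually (gt_mem_nhds hε)
    have hev2 := hev.and (lt_mem_nhds hT)
    rw [Metric.eventually_nhds_iff_ball] at hev2
    obtain ⟨δ, hδ, hb⟩ := hev2
    filter_upwards [Metric.ball_mem_nhds T hδ] with x hx
    have hx0 : 0 < x := (hb x hx).2
    have hAx := integrable_A hB x hx0.le
    have hLx : Integrable (fun ω => A B x ω - c * x) P := hAx.sub (integrable_const _)
    have hDi : Integrable (fun ω => A B x ω - A B T ω - (x - T) * M B T ω) P :=
      (hAx.sub hAT).sub (hMT.const_mul _)
    have hsub : Set.uIoc T x ⊆ Metric.ball T δ := by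
      refine Set.uIoc_subset_uIcc.trans ?_
      have hconv := (convex_ball T δ).ordConnected
      exact hconv.uIcc_subset (Metric.mem_ball_self hδ) hx
    have hl := enorm_int_le (P := P) (fun s ω => M B s ω - M B T ω)
      (fun ω => by have := hMc ω; fun_prop) (fun s => by fun_prop) T x (ENNReal.ofReal ε) (by
        intro s hs
        have hbs := hb s (hsub hs)
        have hi : Integrable (fun ω => M B s ω - M B T ω) P := (integrable_M hB s hbs.2.le).sub hMT
        rw [← ofReal_integral_norm_eq_lintegral_enorm hi]
        exact ENNReal.ofReal_le_ofReal hbs.1.le)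
    have heq : ∀ ω, ∫ s in T..x, (M B s ω - M B T ω)
        = A B x ω - A B T ω - (x - T) * M B T ω := by
      intro ω
      rw [intervalIntegral.integral_sub ((hMc ω).intervalIntegrable _ _) (by simp),
        intervalIntegral.integral_const, smul_eq_mul]
      congr 1
      exact (intervalIntegral.integral_interval_sub_left ((hMc ω).intervalIntegrable _ _)
        ((hMc ω).intervalIntegrable _ _)).symm
    simp_rw [heq] at hl
    rw [← ofReal_integral_norm_eq_lintegral_enorm hDi, ← ENNReal.ofReal_mul hε.le,
      ENNReal.ofReal_le_ofReal_iff (by positivity)] at hl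
    have hzero : ∫ ω, max (A B T ω - c * T) 0 ∂P
      - ∫ ω, max (A B T ω - c * T + (T - T) * (M B T ω - c)) 0 ∂P = 0 := by simp
    rw [hzero, ← integral_sub hLx.pos_part (hLi x).pos_part]
    simp only [sub_zero, smul_zero]
    refine (norm_integral_le_integral_norm _).trans (le_trans ?_ hl)
    refine integral_mono (hLx.pos_part.sub (hLi x).pos_part).norm hDi.norm fun ω => ?_
    simp only [Real.norm_eq_abs]
    refine (abs_max_sub_max_le_abs _ _ _).trans (le_of_eq ?_)
    congr 1; ring
  have := hdiff.fun_add hG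
  simpa using this

theorem deriv_value {Ω : Type*} [MeasurableSpace Ω] {P : Measure Ω} {B : ℝ → Ω → ℝ}
    (hB : IsBrownianMotion P B) (T : ℝ) (hT : 0 < T) (c k : ℝ) :
    ∫ ω, (if 0 < A B T ω - k then M B T ω - c else 0) ∂P
      = (P {ω | Adrift B 1 T ω > k}).toReal - c * (P {ω | A B T ω > k}).toReal := by
  have := hB.isProbabilityMeasure
  have hMT := integrable_M hB T hT.le
  have hS : MeasurableSet {ω | A B T ω > k} := measurableSet_lt measurable_const (meas_A hB T)
  have e : (fun ω => if 0 < A B T ω - k then M B T ω - c else 0)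
      = {ω | A B T ω > k}.indicator (fun ω => M B T ω - c) := by
    ext ω
    simp only [Set.indicator, Set.mem_ofPred_eq, sub_pos, gt_iff_lt]
  rw [e, integral_indicator hS, integral_sub hMT.integrableOn (integrable_const _).integrableOn,
    setIntegral_const, smul_eq_mul, mul_comm c]
  congr 1
  have hg := congrArg (fun m => m (Set.Ioi k)) (girsanov hB 1 T hT)
  rw [Measure.map_apply (meas_A hB T) measurableSet_Ioi,
    Measure.map_apply (meas_Adrift hB 1 T) measurableSet_Ioi,
    withDensity_apply _ ((meas_A hB T) measurableSet_Ioi)] at hg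
  have hs : {ω | Adrift B 1 T ω > k} = Adrift B 1 T ⁻¹' Set.Ioi k := rfl
  rw [hs, ← hg, integral_eq_lintegral_of_nonneg_ae]
  · congr 1
    refine setLIntegral_congr_fun hS fun ω _ => ?_
    simp [M]
  · exact Filter.Eventually.of_forall fun ω => (Real.exp_pos _).le
  · exact hMT.aestronglyMeasurable.restrict

variable {Ω : Type*} [MeasurableSpace Ω] (P : MeasureTheory.Measure Ω) (B : ℝ → Ω → ℝ)

theorem asian_call_vega (hB : IsBrownianMotion P B)
    (κ S₀ r τ σ : ℝ) (hκ : 0 < κ) (hS : 0 < S₀) (hτ : 0 < τ) (hσ : 0 < σ) :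
    HasDerivAt
      (fun s => S₀ / (τ * s ^ 2) * Real.exp (-r * τ) *
        ∫ ω, max (A B (s ^ 2 * τ) ω - s ^ 2 * κ * τ / S₀) 0 ∂P)
      (-(2 / σ) * (S₀ / (τ * σ ^ 2) * Real.exp (-r * τ) *
          ∫ ω, max (A B (σ ^ 2 * τ) ω - σ ^ 2 * κ * τ / S₀) 0 ∂P)
        + 2 * S₀ / σ * Real.exp (-r * τ) *
            (P {ω | Adrift B 1 (σ ^ 2 * τ) ω > σ ^ 2 * κ * τ / S₀}).toReal
        - 2 * κ / σ * Real.exp (-r * τ) *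
            (P {ω | A B (σ ^ 2 * τ) ω > σ ^ 2 * κ * τ / S₀}).toReal) σ := by
  have hT : 0 < σ ^ 2 * τ := by positivity
  have hf := deriv_f hB (σ ^ 2 * τ) hT (κ / S₀)
  have hv := deriv_value hB (σ ^ 2 * τ) hT (κ / S₀) (κ / S₀ * (σ ^ 2 * τ))
  rw [hv] at hf
  have hk : ∀ s : ℝ, s ^ 2 * κ * τ / S₀ = κ / S₀ * (s ^ 2 * τ) := fun s => by ring
  simp_rw [hk]
  have hq : HasDerivAt (fun s : ℝ => s ^ 2 * τ) (2 * σ * τ) σ := by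
    simpa using (hasDerivAt_pow 2 σ).mul_const τ
  have hcomp := HasDerivAt.comp σ hf hq
  have hp : HasDerivAt (fun s : ℝ => S₀ / (τ * s ^ 2) * Real.exp (-r * τ))
      (-(2 / σ) * (S₀ / (τ * σ ^ 2)) * Real.exp (-r * τ)) σ := by
    have h1 : HasDerivAt (fun s : ℝ => τ * s ^ 2) (τ * (2 * σ)) σ := by
      simpa using (hasDerivAt_pow 2 σ).const_mul τ
    have h2 := ((hasDerivAt_const σ S₀).div h1 (by positivity)).mul_const (Real.exp (-r * τ))
    refine h2.congr_deriv ?_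
    field_simp
    ring
  refine (hp.mul hcomp).congr_deriv ?_
  simp only [Function.comp]
  field_simp
  ring
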